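/- arXiv:2306.04467 — 2 statements merged into one kernel-verified Lean document; each statement's English description precedes it below -/
import Mathlib

section
/- Let h > 0, G > 0, U, V ∈ ℝ, λ = 1/(Gh), and let g(u,v) = h·(λ/π)·exp(−λ((u−U)² + (v−V)²)) be the shallow-water Maxwellian equilibrium distribution on ℝ². Then the u-weighted moments of g yield the shallow water x-direction flux vector: ∫∫_{ℝ²} u·g du dv = hU, ∫∫_{ℝ²} u²·g du dv = hU² + ½Gh², and ∫∫_{ℝ²} uv·g du dv = hUV; analogously the v-weighted moments yield the y-direction flux: ∫∫ v·g = hV, ∫∫ uv·g = hUV, ∫∫ v²·g = hV² + ½Gh². In particular the choice λ = 1/(Gh) makes the kinetic pressure ∫∫ (u−U)²·g du dv equal to the hydrostatic shallow water pressure ½Gh². -/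
open MeasureTheory

/-- The shallow-water Maxwellian equilibrium distribution with water height `h`,
velocity `(U,V)` and gravitational constant `G`, where `λ = 1/(Gh)`, as a function of
the particle velocity `p = (u,v) ∈ ℝ²`. -/
noncomputable def swMaxwellian (G h U V : ℝ) (p : ℝ × ℝ) : ℝ :=
  h * ((1 / (G * h)) / Real.pi) *
    Real.exp (-(1 / (G * h)) * ((p.1 - U) ^ 2 + (p.2 - V) ^ 2))

open ProbabilityTheory in
lemma sw_eq (G h U V : ℝ) (hh : 0 < h) (hG : 0 < G) (w : NNReal) (hw : (w : ℝ) = G * h / 2)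
    (p : ℝ × ℝ) :
    swMaxwellian G h U V p = h * (gaussianPDFReal U w p.1 * gaussianPDFReal V w p.2) := by
  have hpi := Real.pi_pos
  have h2 : 2 * (w : ℝ) = G * h := by rw [hw]; ring
  have h3 : 2 * Real.pi * (w : ℝ) = Real.pi * (G * h) := by rw [hw]; ring
  have hpos : 0 < Real.pi * (G * h) := by positivity
  have hs : (√(Real.pi * (G * h)))⁻¹ * (√(Real.pi * (G * h)))⁻¹ = (Real.pi * (G * h))⁻¹ := by
    rw [← mul_inv, Real.mul_self_sqrt hpos.le]
  unfold swMaxwellian gaussianPDFReal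
  rw [h2, h3, mul_mul_mul_comm, hs, ← Real.exp_add, mul_assoc]
  congr 2
  · field_simp
  · congr 1
    field_simp
    ring

open ProbabilityTheory in
lemma sw_moment (G h U V : ℝ) (hh : 0 < h) (hG : 0 < G) (w : NNReal)
    (hw : (w : ℝ) = G * h / 2) (a b : ℝ → ℝ) :
    ∫ p : ℝ × ℝ, (a p.1 * b p.2) * swMaxwellian G h U V p =
      h * ((∫ x, a x ∂gaussianReal U w) * ∫ x, b x ∂gaussianReal V w) := by
  have hw0 : w ≠ 0 := by
    rintro rfl
    have : 0 < G * h := by positivity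
    rw [NNReal.coe_zero] at hw
    linarith
  rw [integral_gaussianReal_eq_integral_smul hw0, integral_gaussianReal_eq_integral_smul hw0,
    ← integral_prod_mul, ← integral_const_mul]
  rw [← Measure.volume_eq_prod]
  congr 1
  ext p
  rw [sw_eq G h U V hh hG w hw]
  simp only [smul_eq_mul]
  ring

open ProbabilityTheory in
lemma gauss_cent (m : ℝ) (w : NNReal) : ∫ x, (x - m) ^ 2 ∂gaussianReal m w = w := by
  have h1 := variance_fun_id_gaussianReal (μ := m) (v := w)
  rw [variance_eq_integral (by fun_prop), integral_id_gaussianReal] at h1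
  exact h1

open ProbabilityTheory in
lemma gauss_sq (m : ℝ) (w : NNReal) : ∫ x, x ^ 2 ∂gaussianReal m w = m ^ 2 + w := by
  have h1 := variance_id_gaussianReal (μ := m) (v := w)
  rw [variance_eq_sub (memLp_id_gaussianReal 2)] at h1
  simp only [Pi.pow_apply, id_eq, integral_id_gaussianReal] at h1
  linarith

/-- The `u`-weighted moments of the shallow-water Maxwellian yield the x-direction flux
vector `(hU, hU² + ½Gh², hUV)ᵀ` of the shallow water equations, the `v`-weighted moments
yield the y-direction flux `(hV, hUV, hV² + ½Gh²)ᵀ`, and the kinetic pressure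
`∫∫ (u−U)²·g` equals the hydrostatic shallow water pressure `½Gh²`. -/
theorem swMaxwellian_flux_moments (h G U V : ℝ) (hh : 0 < h) (hG : 0 < G) :
    (∫ p : ℝ × ℝ, p.1 * swMaxwellian G h U V p) = h * U ∧
    (∫ p : ℝ × ℝ, p.1 ^ 2 * swMaxwellian G h U V p) = h * U ^ 2 + G * h ^ 2 / 2 ∧
    (∫ p : ℝ × ℝ, p.1 * p.2 * swMaxwellian G h U V p) = h * U * V ∧
    (∫ p : ℝ × ℝ, p.2 * swMaxwellian G h U V p) = h * V ∧
    (∫ p : ℝ × ℝ, p.1 * p.2 * swMaxwellian G h U V p) = h * U * V ∧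
    (∫ p : ℝ × ℝ, p.2 ^ 2 * swMaxwellian G h U V p) = h * V ^ 2 + G * h ^ 2 / 2 ∧
    (∫ p : ℝ × ℝ, (p.1 - U) ^ 2 * swMaxwellian G h U V p) = G * h ^ 2 / 2 := by
  obtain ⟨w, hw⟩ : ∃ w : NNReal, (w : ℝ) = G * h / 2 := ⟨⟨G * h / 2, by positivity⟩, rfl⟩
  have M := sw_moment G h U V hh hG w hw
  have m1 := M (fun x => x) (fun _ => 1)
  have m2 := M (fun x => x ^ 2) (fun _ => 1)
  have m3 := M (fun x => x) (fun x => x)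
  have m4 := M (fun _ => 1) (fun x => x)
  have m5 := M (fun _ => 1) (fun x => x ^ 2)
  have m6 := M (fun x => (x - U) ^ 2) (fun _ => 1)
  simp only [mul_one, one_mul, gauss_sq, gauss_cent, ProbabilityTheory.integral_id_gaussianReal,
    integral_const, probReal_univ, smul_eq_mul, hw] at m1 m2 m3 m4 m5 m6
  refine ⟨m1, ?_, ?_, m4, ?_, ?_, ?_⟩
  · rw [m2]; ring
  · rw [m3]; ring
  · rw [m3]; ring
  · rw [m5]; ring
  · rw [m6]; ring
end

section
/- Let f : ℝᵈ → ℝᵈ be C⁴ and let y : [0,T] → ℝᵈ solve the autonomous ODE y′ = f(y). Define D(w) = Df(w)·f(w) (the derivative of f along the flow). For a step size Δt > 0 consider the two-stage fourth-order (S2O4) update starting from y(t₀): w_half = y(t₀) + (Δt/2)·f(y(t₀)) + (Δt²/8)·D(y(t₀)), and w_next = y(t₀) + Δt·f(y(t₀)) + (Δt²/6)·D(y(t₀)) + (Δt²/3)·D(w_half). Then the update is fourth-order accurate in time: ‖w_next − y(t₀ + Δt)‖ = O(Δt⁵) as Δt → 0, uniformly on compact sets. -/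
noncomputable def s2G {E : Type*} [NormedAddCommGroup E] [NormedSpace ℝ E] (f : E → E) : ℕ → E → E
  | 0 => f
  | k + 1 => fun w => fderiv ℝ (s2G f k) w (f w)

lemma s2G_contDiff {E : Type*} [NormedAddCommGroup E] [NormedSpace ℝ E] (f : E → E)
    (hf : ContDiff ℝ 4 f) : ∀ k m : ℕ, k + m ≤ 4 → ContDiff ℝ m (s2G f k) := by
  intro k
  induction k with
  | zero =>
    intro m hm
    refine hf.of_le ?_
    have : m ≤ 4 := by omega
    exact_mod_cast this
  | succ k ih =>
    intro m hm
    have h1 : ContDiff ℝ ((m + 1 : ℕ) : WithTop ℕ∞) (s2G f k) := ih (m + 1) (by omega)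
    have h2 : ContDiff ℝ m f := by
      refine hf.of_le ?_
      have : m ≤ 4 := by omega
      exact_mod_cast this
    have h3 : ContDiff ℝ m (fderiv ℝ (s2G f k)) := h1.fderiv_right (by push_cast; exact le_rfl)
    exact h3.clm_apply h2

lemma s2_step {E : Type*} [NormedAddCommGroup E] [NormedSpace ℝ E] (φ φ' : ℝ → E) (h K : ℝ)
    (n : ℕ) (h0 : φ 0 = 0) (hK : 0 ≤ K)
    (hd : ∀ s ∈ Set.Icc (0:ℝ) h, HasDerivAt φ (φ' s) s)
    (hb : ∀ s ∈ Set.Icc (0:ℝ) h, ‖φ' s‖ ≤ K * s ^ n) :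
    ∀ s ∈ Set.Icc (0:ℝ) h, ‖φ s‖ ≤ K * s ^ (n + 1) := by
  intro s hs
  have := (convex_Icc (0:ℝ) s).norm_image_sub_le_of_norm_hasDerivWithin_le (f := φ) (f' := φ')
    (C := K * s ^ n) (x := 0) (y := s)
    (fun x hx => (hd x ⟨hx.1, hx.2.trans hs.2⟩).hasDerivWithinAt)
    (fun x hx => (hb x ⟨hx.1, hx.2.trans hs.2⟩).trans
      (by have := hx.1; have := hx.2; gcongr)) ⟨le_rfl, hs.1⟩ ⟨hs.1, le_rfl⟩
  rw [h0, sub_zero, sub_zero, Real.norm_of_nonneg hs.1] at this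
  rw [pow_succ, ← mul_assoc]; exact this

lemma s2_taylor {E : Type*} [NormedAddCommGroup E] [NormedSpace ℝ E] (t₀ h M : ℝ) (hM : 0 ≤ M)
    (n : ℕ) : ∀ u : ℕ → ℝ → E,
    (∀ k < n, ∀ t ∈ Set.Icc t₀ (t₀ + h), HasDerivAt (u k) (u (k + 1) t) t) →
    (∀ t ∈ Set.Icc t₀ (t₀ + h), ‖u n t‖ ≤ M) →
    ∀ s ∈ Set.Icc (0:ℝ) h,
      ‖u 0 (t₀ + s) - ∑ k ∈ Finset.range n, (s ^ k / (k.factorial : ℝ)) • u k t₀‖ ≤ M * s ^ n := by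
  induction n with
  | zero =>
    intro u _ hb s hs
    simpa using hb (t₀ + s) ⟨by linarith [hs.1], by linarith [hs.2]⟩
  | succ n ih =>
    intro u hd hb
    have ih' := ih (fun k => u (k + 1)) (fun k hk => hd (k + 1) (by omega)) hb
    refine s2_step (fun s => u 0 (t₀ + s) -
      ∑ k ∈ Finset.range (n + 1), (s ^ k / (k.factorial : ℝ)) • u k t₀) _ h M n ?_ hM ?_ ih'
    · simp [Finset.sum_range_succ']
    · intro s hs
      have e1 : HasDerivAt (fun s => u 0 (t₀ + s)) (u 1 (t₀ + s)) s :=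
        (hd 0 (by omega) (t₀ + s) ⟨by linarith [hs.1], by linarith [hs.2]⟩).comp_const_add t₀ s
      refine e1.sub ?_
      simp only [Finset.sum_range_succ' _ n]
      simp only [pow_zero]
      refine HasDerivAt.add_const _ (HasDerivAt.fun_sum fun k _ => ?_)
      have e2 : HasDerivAt (fun s : ℝ => s ^ (k + 1) / ((k + 1).factorial : ℝ))
          (s ^ k / (k.factorial : ℝ)) s := by
        refine ((hasDerivAt_pow (k + 1) s).div_const ((k + 1).factorial : ℝ)).congr_deriv ?_
        rw [Nat.factorial_succ]
        have : (k.factorial : ℝ) ≠ 0 := by exact_mod_cast k.factorial_ne_zero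
        push_cast
        have : (k : ℝ) + 1 ≠ 0 := by positivity
        field_simp
      exact e2.smul_const _

/-- The two-stage fourth-order (S2O4) update for an autonomous ODE `y' = f(y)` with
`f ∈ C⁴`, using the derivative `D(w) = Df(w)·f(w)` of `f` along the flow:
`w_half = y(t₀) + (Δt/2)f(y(t₀)) + (Δt²/8)D(y(t₀))` and
`w_next = y(t₀) + Δt·f(y(t₀)) + (Δt²/6)D(y(t₀)) + (Δt²/3)D(w_half)`,
has local truncation error `O(Δt⁵)`, uniformly for `t₀` in the compact interval
`[0,T]`. -/
theorem S2O4_fourth_order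
    (dim : ℕ) (T : ℝ) (hT : 0 < T)
    (f : EuclideanSpace ℝ (Fin dim) → EuclideanSpace ℝ (Fin dim))
    (hf : ContDiff ℝ 4 f)
    (y : ℝ → EuclideanSpace ℝ (Fin dim))
    (hy : ∀ t ∈ Set.Icc (0 : ℝ) T, HasDerivAt y (f (y t)) t) :
    ∃ C > (0 : ℝ), ∃ δ > (0 : ℝ), ∀ t₀ ∈ Set.Icc (0 : ℝ) T, ∀ Δt : ℝ,
      0 < Δt → Δt ≤ δ → t₀ + Δt ≤ T →
      ‖(y t₀ + Δt • f (y t₀)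
          + (Δt ^ 2 / 6) • fderiv ℝ f (y t₀) (f (y t₀))
          + (Δt ^ 2 / 3) • (fun w => fderiv ℝ f w (f w))
              (y t₀ + (Δt / 2) • f (y t₀)
                + (Δt ^ 2 / 8) • fderiv ℝ f (y t₀) (f (y t₀))))
        - y (t₀ + Δt)‖ ≤ C * Δt ^ 5 := by
  set G := s2G f with hG
  have hGc := s2G_contDiff f hf
  set u : ℕ → ℝ → EuclideanSpace ℝ (Fin dim) := fun k => match k with
    | 0 => y
    | k + 1 => fun t => G k (y t) with hu
  have hud : ∀ k < 5, ∀ t ∈ Set.Icc (0:ℝ) T, HasDerivAt (u k) (u (k + 1) t) t := by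
    intro k hk t ht
    match k, hk with
    | 0, _ => exact hy t ht
    | k + 1, hk =>
      have h1 : DifferentiableAt ℝ (G k) (y t) :=
        ((hGc k 1 (by omega)).differentiable (by norm_num)) (y t)
      exact h1.hasFDerivAt.comp_hasDerivAt t (hy t ht)
  have hyc : ContinuousOn y (Set.Icc 0 T) := fun t ht => (hy t ht).continuousAt.continuousWithinAt
  have hub : ∀ k ≤ 5, ∃ M, 0 ≤ M ∧ ∀ t ∈ Set.Icc (0:ℝ) T, ‖u k t‖ ≤ M := by
    intro k hk
    have hc : ContinuousOn (u k) (Set.Icc 0 T) := by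
      match k, hk with
      | 0, _ => exact hyc
      | k + 1, hk => exact (hGc k 0 (by omega)).continuous.comp_continuousOn hyc
    obtain ⟨M, hM⟩ := isCompact_Icc.exists_bound_of_continuousOn hc
    exact ⟨M, (norm_nonneg _).trans (hM 0 ⟨le_rfl, hT.le⟩), hM⟩
  obtain ⟨B, hB0, hB⟩ := hub 0 (by norm_num)
  obtain ⟨M3, hM30, hM3⟩ := hub 3 (by norm_num)
  obtain ⟨M, hM0, hM⟩ := hub 5 (by norm_num)
  have hD : ContDiff ℝ 1 (G 1) := by exact_mod_cast hGc 1 1 (by norm_num)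
  obtain ⟨L, hL⟩ := (isCompact_closedBall (0 : EuclideanSpace ℝ (Fin dim)) (B + M3)).exists_bound_of_continuousOn
    (hD.continuous_fderiv (by norm_num)).continuousOn
  have hL0 : 0 ≤ L := (norm_nonneg _).trans (hL 0 (Metric.mem_closedBall_self (by positivity)))
  refine ⟨L * M3 + 2 * M + 1, by positivity, 1, one_pos, ?_⟩
  intro t₀ ht₀ h hh hh1 hhT
  have hsub : ∀ t ∈ Set.Icc t₀ (t₀ + h), t ∈ Set.Icc (0:ℝ) T :=
    fun t ht => ⟨ht₀.1.trans ht.1, ht.2.trans hhT⟩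
  have T5 := s2_taylor t₀ h M hM0 5 u (fun k hk t ht => hud k hk t (hsub t ht))
    (fun t ht => hM t (hsub t ht)) h ⟨hh.le, le_rfl⟩
  have T3 := s2_taylor t₀ h M hM0 3 (fun k => u (k + 2))
    (fun k hk t ht => hud (k + 2) (by omega) t (hsub t ht))
    (fun t ht => hM t (hsub t ht)) (h / 2) ⟨by linarith, by linarith⟩
  have P3 := s2_taylor t₀ h M3 hM30 3 u
    (fun k hk t ht => hud k (by omega) t (hsub t ht))
    (fun t ht => hM3 t (hsub t ht)) (h / 2) ⟨by linarith, by linarith⟩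
  simp only [Finset.sum_range_succ, Finset.sum_range_zero, Nat.factorial] at T5 T3 P3
  have e1 : u 0 = y := rfl
  have e2 : ∀ t, u 1 t = f (y t) := fun _ => rfl
  have e3 : ∀ t, u 2 t = G 1 (y t) := fun _ => rfl
  have e4 : ∀ w, G 1 w = fderiv ℝ f w (f w) := fun _ => rfl
  simp only [← e4]
  norm_num only [e1, e2, e3] at T5 T3 P3
  set w := y t₀ + (h / 2) • f (y t₀) + (h ^ 2 / 8) • G 1 (y t₀) with hw
  have hmid : t₀ + h / 2 ∈ Set.Icc (0:ℝ) T := hsub _ ⟨by linarith, by linarith⟩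
  have hP : ‖w - y (t₀ + h / 2)‖ ≤ M3 * (h / 2) ^ 3 := by
    rw [norm_sub_rev]
    refine le_trans (le_of_eq (congrArg norm ?_)) P3
    rw [hw]; module
  have hh3 : h ^ 3 ≤ 1 := pow_le_one₀ hh.le hh1
  have hyB := hB _ hmid
  rw [e1] at hyB
  have hLip : ‖G 1 w - G 1 (y (t₀ + h / 2))‖ ≤ L * ‖w - y (t₀ + h / 2)‖ := by
    refine (convex_closedBall (0 : EuclideanSpace ℝ (Fin dim)) (B + M3)).norm_image_sub_le_of_norm_fderiv_le
      (𝕜 := ℝ) (fun x _ => hD.differentiable (by norm_num) x) hL ?_ ?_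
    · rw [mem_closedBall_zero_iff]; linarith
    · rw [mem_closedBall_zero_iff]
      have : ‖w‖ ≤ ‖w - y (t₀ + h / 2)‖ + ‖y (t₀ + h / 2)‖ := by
        simpa using norm_add_le (w - y (t₀ + h / 2)) (y (t₀ + h / 2))
      have : M3 * (h / 2) ^ 3 ≤ M3 * 1 := by
        gcongr
        have : 0 < h ^ 3 := by positivity
        nlinarith
      linarith
  set X := G 1 w - G 1 (y (t₀ + h / 2)) with hX
  have hXb : ‖X‖ ≤ L * (M3 * (h / 2) ^ 3) := hLip.trans (by gcongr)
  generalize hR5 : y (t₀ + h) - _ = R5 at T5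
  generalize hR3 : G 1 (y (t₀ + h / 2)) - _ = R3 at T3
  have key : y t₀ + h • f (y t₀) + (h ^ 2 / 6) • G 1 (y t₀) + (h ^ 2 / 3) • G 1 w - y (t₀ + h)
      = (h ^ 2 / 3) • X + (h ^ 2 / 3) • R3 - R5 := by
    rw [hX, ← hR5, ← hR3]
    module
  rw [key]
  have hc : 0 ≤ h ^ 2 / 3 := by positivity
  calc _ ≤ ‖(h ^ 2 / 3) • X‖ + ‖(h ^ 2 / 3) • R3‖ + ‖R5‖ :=
        (norm_sub_le _ _).trans (by gcongr; exact norm_add_le _ _)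
    _ = (h ^ 2 / 3) * ‖X‖ + (h ^ 2 / 3) * ‖R3‖ + ‖R5‖ := by
        rw [norm_smul, norm_smul, Real.norm_of_nonneg hc]
    _ ≤ (h ^ 2 / 3) * (L * (M3 * (h / 2) ^ 3)) + (h ^ 2 / 3) * (M * (h / 2) ^ 3) + M * h ^ 5 := by
        gcongr
    _ ≤ _ := by
        have a1 : 0 ≤ L * M3 * h ^ 5 := by positivity
        have a2 : 0 ≤ M * h ^ 5 := by positivity
        have a3 : 0 ≤ h ^ 5 := by positivity
        ring_nf at a1 a2 a3 ⊢
        linarith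
end
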